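/- arXiv:2605.00198 — 4 statements merged into one kernel-verified Lean document; each statement's English description precedes it below -/
import Mathlib

section
/- If the CDF G of W is regularly varying at zero with index β = 1, then the function A(t) = t ∫_0^{B(t)} G(1/u) du is regularly varying at infinity with index 1. -/
open MeasureTheory ProbabilityTheory Filter

lemma aux_int (φ : ℝ → ℝ) (hm : Measurable φ) (hpos : ∀ u > 0, 0 < φ u) (hle : ∀ u > 0, φ u ≤ 1)
    (a b : ℝ) (ha : 0 ≤ a) : IntegrableOn φ (Set.Ioc a b) := by
  refine Measure.integrableOn_of_bounded (M := 1) (by simp) hm.aestronglyMeasurable ?_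
  refine (ae_restrict_iff' measurableSet_Ioc).2 (Eventually.of_forall fun u hu => ?_)
  have : 0 < u := lt_of_le_of_lt ha hu.1
  rw [Real.norm_eq_abs, abs_of_pos (hpos u this)]
  exact hle u this

lemma aux_split (φ : ℝ → ℝ) (hm : Measurable φ) (hpos : ∀ u > 0, 0 < φ u) (hle : ∀ u > 0, φ u ≤ 1)
    (a b : ℝ) (ha : 0 ≤ a) (hab : a ≤ b) :
    ∫ u in Set.Ioc 0 b, φ u = (∫ u in Set.Ioc 0 a, φ u) + ∫ u in Set.Ioc a b, φ u := by
  rw [← Set.Ioc_union_Ioc_eq_Ioc ha hab]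
  refine setIntegral_union ?_ measurableSet_Ioc (aux_int φ hm hpos hle _ _ le_rfl)
    (aux_int φ hm hpos hle _ _ ha)
  rw [Set.disjoint_left]
  intro u hu hu'
  exact absurd hu'.1 (not_lt.2 hu.2)

lemma aux_lower (φ : ℝ → ℝ) (hm : Measurable φ) (hpos : ∀ u > 0, 0 < φ u) (hle : ∀ u > 0, φ u ≤ 1)
    (hanti : AntitoneOn φ (Set.Ioi 0))
    (a b : ℝ) (ha : 0 ≤ a) (hab : a ≤ b) :
    (b - a) * φ b ≤ ∫ u in Set.Ioc a b, φ u := by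
  have h := setIntegral_mono_on (μ := volume) (s := Set.Ioc a b) (f := fun _ => φ b) (g := φ)
    (integrableOn_const (by simp)) (aux_int φ hm hpos hle _ _ ha) measurableSet_Ioc
    (fun u hu => hanti (lt_of_le_of_lt ha hu.1) (lt_of_lt_of_le (lt_of_le_of_lt ha hu.1) hu.2) hu.2)
  simpa [hab] using h

lemma aux_upper (φ : ℝ → ℝ) (hm : Measurable φ) (hpos : ∀ u > 0, 0 < φ u) (hle : ∀ u > 0, φ u ≤ 1)
    (hanti : AntitoneOn φ (Set.Ioi 0))
    (a b : ℝ) (ha : 0 < a) (hab : a ≤ b) :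
    ∫ u in Set.Ioc a b, φ u ≤ (b - a) * φ a := by
  have h := setIntegral_mono_on (μ := volume) (s := Set.Ioc a b) (g := fun _ => φ a) (f := φ)
    (aux_int φ hm hpos hle _ _ ha.le) (integrableOn_const (by simp)) measurableSet_Ioc
    (fun u hu => hanti ha (lt_trans ha hu.1) hu.1.le)
  simpa [hab] using h

lemma aux_pos (φ : ℝ → ℝ) (hm : Measurable φ) (hpos : ∀ u > 0, 0 < φ u) (hle : ∀ u > 0, φ u ≤ 1)
    (hanti : AntitoneOn φ (Set.Ioi 0)) (b : ℝ) (hb : 0 < b) :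
    0 < ∫ u in Set.Ioc 0 b, φ u := by
  have := aux_lower φ hm hpos hle hanti 0 b le_rfl hb.le
  have h2 := mul_pos hb (hpos b hb)
  simp only [sub_zero] at this
  linarith

lemma aux_mono (φ : ℝ → ℝ) (hm : Measurable φ) (hpos : ∀ u > 0, 0 < φ u) (hle : ∀ u > 0, φ u ≤ 1)
    (hanti : AntitoneOn φ (Set.Ioi 0)) (a b : ℝ) (ha : 0 < a) (hab : a ≤ b) :
    ∫ u in Set.Ioc 0 a, φ u ≤ ∫ u in Set.Ioc 0 b, φ u := by
  rw [aux_split φ hm hpos hle a b ha.le hab]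
  have := aux_lower φ hm hpos hle hanti a b ha.le hab
  have h2 := mul_nonneg (sub_nonneg.2 hab) (hpos b (ha.trans_le hab)).le
  linarith

lemma aux_grow (φ : ℝ → ℝ) (hm : Measurable φ) (hpos : ∀ u > 0, 0 < φ u) (hle : ∀ u > 0, φ u ≤ 1)
    (hanti : AntitoneOn φ (Set.Ioi 0))
    (hrv : Tendsto (fun x => φ (x / 2) / φ x) atTop (nhds 2)) (n : ℕ) :
    ∀ᶠ x in atTop, (n : ℝ) / 4 * (x * φ x) ≤ ∫ u in Set.Ioc 0 x, φ u := by
  induction n with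
  | zero =>
    filter_upwards [eventually_gt_atTop 0] with x hx
    have := aux_pos φ hm hpos hle hanti x hx
    simpa using this.le
  | succ n ih =>
    have hn : (0 : ℝ) < n + 1 := by positivity
    have h2 : Tendsto (fun x : ℝ => x / 2) atTop atTop :=
      tendsto_id.atTop_div_const (by norm_num)
    have h3 : (2 : ℝ) * (1 - 1 / (n + 1)) < 2 := by
      have : 0 < 1 / ((n : ℝ) + 1) := by positivity
      linarith
    filter_upwards [h2.eventually ih, hrv.eventually (lt_mem_nhds h3), eventually_gt_atTop 0]
      with x h4 h5 hx
    have hp := hpos x hx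
    rw [lt_div_iff₀ hp] at h5
    rw [aux_split φ hm hpos hle (x / 2) x (by linarith) (by linarith)]
    have h6 := aux_lower φ hm hpos hle hanti (x / 2) x (by linarith) (by linarith)
    have h7 : (n : ℝ) / 4 * (x / 2 * (2 * (1 - 1 / (n + 1)) * φ x)) ≤
        (n : ℝ) / 4 * (x / 2 * φ (x / 2)) := by gcongr
    have h8 : (n : ℝ) / 4 * (x / 2 * (2 * (1 - 1 / (n + 1)) * φ x)) =
        (n : ℝ) * (1 - 1 / (n + 1)) / 4 * (x * φ x) := by ring
    have h9 : (n : ℝ) * (1 - 1 / (n + 1)) ≥ n - 1 := by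
      have : (n : ℝ) * (1 / (n + 1)) ≤ 1 := by
        rw [mul_one_div, div_le_one hn]; linarith
      linarith
    have h10 := mul_le_mul_of_nonneg_right h9 (mul_pos hx hp).le
    push_cast
    nlinarith

lemma aux_slow (φ : ℝ → ℝ) (hm : Measurable φ) (hpos : ∀ u > 0, 0 < φ u) (hle : ∀ u > 0, φ u ≤ 1)
    (hanti : AntitoneOn φ (Set.Ioi 0))
    (hrv : Tendsto (fun x => φ (x / 2) / φ x) atTop (nhds 2)) (C : ℝ) (hC : 1 ≤ C) :
    ∀ ε > 0, ∀ᶠ x in atTop, ∫ u in Set.Ioc 0 (C * x), φ u ≤ (1 + ε) * ∫ u in Set.Ioc 0 x, φ u := by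
  intro ε hε
  obtain ⟨n, hn⟩ := exists_nat_ge (4 * (C - 1) / ε)
  filter_upwards [aux_grow φ hm hpos hle hanti hrv n, eventually_gt_atTop 0] with x h1 hx
  have hCx : x ≤ C * x := by nlinarith
  rw [aux_split φ hm hpos hle x (C * x) hx.le hCx]
  have h2 := aux_upper φ hm hpos hle hanti x (C * x) hx hCx
  have h3 : C - 1 ≤ ε * (n / 4) := by
    rw [div_le_iff₀ hε] at hn; linarith
  have h4 := mul_le_mul_of_nonneg_right h3 (mul_pos hx (hpos x hx)).le
  have h5 := mul_le_mul_of_nonneg_left h1 hε.le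
  nlinarith

/-- Let `W` be a random variable with values in `(0,∞)` with continuous
positive Lebesgue density `gW` on `(0,∞)`, CDF `G` (strictly increasing on `[0,∞)` with range
`[0,1)`), inverse `H`, `B t = 1/H(1/t)` and `A t = t * ∫_0^{B t} G(1/u) du`.  If `G` is
regularly varying at `0` with index `β = 1`, then `A` is regularly varying at `∞` with
index `1`. -/
theorem stmt1
    {Ω : Type*} [MeasureSpace Ω] [IsProbabilityMeasure (ℙ : Measure Ω)]
    (W : Ω → ℝ) (hWmeas : Measurable W)
    (gW : ℝ → ℝ)
    (hgW_pos : ∀ w ∈ Set.Ioi (0 : ℝ), 0 < gW w)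
    (hgW_cont : ContinuousOn gW (Set.Ioi 0))
    (hgW_supp : ∀ w ≤ (0 : ℝ), gW w = 0)
    (hdens : Measure.map W ℙ = volume.withDensity (fun w => ENNReal.ofReal (gW w)))
    (G H B A : ℝ → ℝ)
    (hG : ∀ u, G u = (ℙ {ω | W ω ≤ u}).toReal)
    (hGmono : StrictMonoOn G (Set.Ici 0))
    (hGrange : G '' Set.Ici 0 = Set.Ico 0 1)
    (hH : ∀ u ≥ (0 : ℝ), H (G u) = u)
    (hGH : ∀ v ∈ Set.Ico (0 : ℝ) 1, G (H v) = v)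
    (hB : ∀ t, B t = 1 / H (1 / t))
    (hA : ∀ t, A t = t * ∫ u in Set.Ioc (0 : ℝ) (B t), G (1 / u))
    (hreg : ∀ s > (0 : ℝ),
      Tendsto (fun t => G (s * t) / G t) (nhdsWithin 0 (Set.Ioi 0)) (nhds (s ^ (1 : ℝ)))) :
    ∀ s > (0 : ℝ),
      Tendsto (fun t => A (s * t) / A t) atTop (nhds (s ^ (1 : ℝ))) := by
  have h0mem : ∀ u, 0 ≤ u → 0 ≤ G u ∧ G u < 1 := fun u hu => by
    have : G u ∈ Set.Ico (0 : ℝ) 1 := hGrange ▸ Set.mem_image_of_mem G hu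
    exact this
  have hGpos : ∀ u, 0 < u → 0 < G u := fun u hu =>
    lt_of_le_of_lt (h0mem 0 le_rfl).1 (hGmono (Set.mem_Ici.2 le_rfl) (Set.mem_Ici.2 hu.le) hu)
  have hG0 : G 0 = 0 := by
    have : (0 : ℝ) ∈ G '' Set.Ici 0 := by rw [hGrange]; simp
    obtain ⟨u, hu, hu0⟩ := this
    rcases (Set.mem_Ici.1 hu).eq_or_lt with h | h
    · rw [← h] at hu0; exact hu0
    · exact absurd hu0 (hGpos u h).ne'
  have hGm : Monotone G := by
    intro a b hab
    rw [hG, hG]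
    exact ENNReal.toReal_mono (measure_ne_top _ _) (measure_mono fun ω hω => le_trans hω hab)
  set φ : ℝ → ℝ := fun u => G (1 / u) with hφ
  have hm : Measurable φ := hGm.measurable.comp (measurable_const.div measurable_id)
  have hpos : ∀ u > 0, 0 < φ u := fun u hu => hGpos _ (one_div_pos.2 hu)
  have hle : ∀ u > 0, φ u ≤ 1 := fun u hu => (h0mem _ (one_div_pos.2 hu).le).2.le
  have hanti : AntitoneOn φ (Set.Ioi 0) := fun a ha b hb hab =>
    hGm (one_div_le_one_div_of_le ha hab)
  have hinv : Tendsto (fun x : ℝ => 1 / x) atTop (nhdsWithin 0 (Set.Ioi 0)) := by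
    simpa using tendsto_inv_atTop_nhdsGT_zero (𝕜 := ℝ)
  have hrv : Tendsto (fun x => φ (x / 2) / φ x) atTop (nhds 2) := by
    have := (hreg 2 (by norm_num)).comp hinv
    simp only [Real.rpow_one] at this
    refine this.congr fun x => ?_
    simp only [hφ, Function.comp]
    congr 2
    rw [one_div_div]; ring
  -- properties of `h t = H (1/t)`
  have hHpos : ∀ t > 1, 0 < H (1 / t) := fun t ht => by
    have hv0 : 0 < 1 / t := by positivity
    have hv : 1 / t ∈ G '' Set.Ici 0 := by
      rw [hGrange]
      exact ⟨hv0.le, by rw [div_lt_one (by linarith)]; exact ht⟩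
    obtain ⟨u, hu, hu0⟩ := hv
    rw [← hu0, hH u hu]
    rcases (Set.mem_Ici.1 hu).eq_or_lt with h | h
    · rw [← h, hG0] at hu0; linarith
    · exact h
  have hGh : ∀ t > 1, G (H (1 / t)) = 1 / t := fun t ht =>
    hGH _ ⟨by positivity, by rw [div_lt_one (by linarith)]; exact ht⟩
  have hH0 : Tendsto (fun t => H (1 / t)) atTop (nhdsWithin 0 (Set.Ioi 0)) := by
    refine tendsto_nhdsWithin_iff.2 ⟨?_, ?_⟩
    · refine tendsto_order.2 ⟨fun a ha => ?_, fun a ha => ?_⟩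
      · filter_upwards [eventually_gt_atTop 1] with t ht
        exact ha.trans (hHpos t ht)
      · have h1 : Tendsto (fun x : ℝ => 1 / x) atTop (nhds 0) := hinv.mono_right nhdsWithin_le_nhds
        filter_upwards [eventually_gt_atTop 1, h1.eventually (gt_mem_nhds (hGpos a ha))] with t ht h2
        rw [← hGh t ht] at h2
        exact hGm.reflect_lt h2
    · filter_upwards [eventually_gt_atTop 1] with t ht
      exact hHpos t ht
  have hBtop : Tendsto B atTop atTop := by
    have := tendsto_inv_nhdsGT_zero.comp hH0
    refine this.congr fun t => ?_
    simp [hB]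
  have hBpos : ∀ t > 1, 0 < B t := fun t ht => by rw [hB]; exact one_div_pos.2 (hHpos t ht)
  have key : ∀ s > (0 : ℝ), ∃ C ≥ (1 : ℝ), ∀ᶠ t in atTop, B t ≤ C * B (s * t) := by
    intro s hs
    have hs' : 0 < 1 / s := by positivity
    refine ⟨1 / s + 1, by linarith, ?_⟩
    have hC : 0 < 1 / s + 1 := by linarith
    have h1 := (hreg _ hC).comp hH0
    rw [Real.rpow_one] at h1
    have h2 : Tendsto (fun t => s * t) atTop atTop := tendsto_id.const_mul_atTop hs
    filter_upwards [h1.eventually (lt_mem_nhds (lt_add_one (1 / s))), eventually_gt_atTop 1,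
      h2.eventually (eventually_gt_atTop 1)] with t h3 ht hst
    simp only [Function.comp] at h3
    have ht0 : 0 < 1 / t := by positivity
    rw [hGh t ht, lt_div_iff₀ ht0] at h3
    have h4 : 1 / s * (1 / t) = 1 / (s * t) := by field_simp
    rw [h4, ← hGh _ hst] at h3
    have h5 := hGm.reflect_lt h3
    rw [hB, hB, mul_one_div, div_le_div_iff₀ (hHpos t ht) (hHpos _ hst)]
    linarith
  intro s hs
  rw [Real.rpow_one]
  have hst : Tendsto (fun t => s * t) atTop atTop := tendsto_id.const_mul_atTop hs
  set I : ℝ → ℝ := fun x => ∫ u in Set.Ioc (0 : ℝ) x, φ u with hI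
  have hIpos : ∀ x > 0, 0 < I x := aux_pos φ hm hpos hle hanti
  have step : ∀ s > (0 : ℝ), ∀ ε > 0, ∀ᶠ t in atTop, I (B t) ≤ (1 + ε) * I (B (s * t)) := by
    intro s hs ε hε
    obtain ⟨C, hC, hCe⟩ := key s hs
    have hst : Tendsto (fun t => s * t) atTop atTop := tendsto_id.const_mul_atTop hs
    filter_upwards [hCe, eventually_gt_atTop 1,
      (hBtop.comp hst).eventually (aux_slow φ hm hpos hle hanti hrv C hC ε hε)] with t h1 ht h2
    exact (aux_mono φ hm hpos hle hanti _ _ (hBpos t ht) h1).trans h2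
  have main : Tendsto (fun t => I (B (s * t)) / I (B t)) atTop (nhds 1) := by
    refine tendsto_order.2 ⟨fun a ha => ?_, fun a ha => ?_⟩
    · by_cases ha0 : a ≤ 0
      · filter_upwards [eventually_gt_atTop 1, hst.eventually (eventually_gt_atTop 1)] with t ht h1
        exact ha0.trans_lt (div_pos (hIpos _ (hBpos _ h1)) (hIpos _ (hBpos _ ht)))
      · push Not at ha0
        have hε : 0 < (1 - a) / (2 * a) := div_pos (by linarith) (by linarith)
        filter_upwards [eventually_gt_atTop 1, hst.eventually (eventually_gt_atTop 1),
          step s hs _ hε] with t ht h1 h2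
        have p1 := hIpos _ (hBpos _ h1)
        rw [lt_div_iff₀ (hIpos _ (hBpos _ ht))]
        have h3 := mul_le_mul_of_nonneg_left h2 ha0.le
        have h4 : a * ((1 + (1 - a) / (2 * a)) * I (B (s * t))) = (a + 1) / 2 * I (B (s * t)) := by
          field_simp; ring
        rw [h4] at h3
        nlinarith
    · have hε : 0 < (a - 1) / 2 := by linarith
      filter_upwards [eventually_gt_atTop 1, hst.eventually (eventually_gt_atTop 1),
        hst.eventually (step (1 / s) (by positivity) _ hε)] with t ht h1 h2
      have p1 := hIpos _ (hBpos _ ht)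
      rw [div_lt_iff₀ p1]
      have h3 : 1 / s * (s * t) = t := by field_simp
      rw [h3] at h2
      nlinarith
  have := main.const_mul s
  rw [mul_one] at this
  refine this.congr' ?_
  filter_upwards [eventually_gt_atTop 1] with t ht
  have ht0 : t ≠ 0 := by positivity
  rw [hA, hA]
  change s * (I (B (s * t)) / I (B t)) = s * t * I (B (s * t)) / (t * I (B t))
  have := (hIpos _ (hBpos t ht)).ne'
  field_simp
end

section
/- Assume the CDF G of W is regularly varying at zero with index β = 1 and that ∫_0^∞ G(1/u) du = ∞. Then A(t)/B(t) → ∞ as t → ∞. -/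
open MeasureTheory ProbabilityTheory Filter

lemma aux_lower_s6 (G : ℝ → ℝ) (hm : Monotone G) (h0 : ∀ u, 0 ≤ G u) (h1 : ∀ u, G u ≤ 1) (n : ℕ) :
    ∀ x > (0 : ℝ), ∑ k ∈ Finset.range n, (1 / 2 : ℝ) ^ (k + 1) * G (2 ^ k * x) ≤
      x * ∫ u in Set.Ioc (0 : ℝ) (1 / x), G (1 / u) := by
  have hint : ∀ a b : ℝ, IntegrableOn (fun u => G (1 / u)) (Set.Ioc a b) := by
    intro a b
    have hmeas : Measurable (fun u : ℝ => G (1 / u)) :=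
      hm.measurable.comp (measurable_const.div measurable_id)
    refine Measure.integrableOn_of_bounded (M := 1) (by simp) hmeas.aestronglyMeasurable ?_
    refine Eventually.of_forall fun u => ?_
    rw [Real.norm_eq_abs, abs_of_nonneg (h0 _)]
    exact h1 _
  induction n with
  | zero =>
    intro x hx
    simp only [Finset.range_zero, Finset.sum_empty]
    exact mul_nonneg hx.le (integral_nonneg fun u => h0 _)
  | succ n ih =>
    intro x hx
    have hle : 1 / (2 * x) ≤ 1 / x := by
      apply one_div_le_one_div_of_le hx; linarith
    have hpos : 0 < 1 / (2 * x) := by positivity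
    have hsplit : ∫ u in Set.Ioc (0 : ℝ) (1 / x), G (1 / u) =
        (∫ u in Set.Ioc (0 : ℝ) (1 / (2 * x)), G (1 / u)) +
          ∫ u in Set.Ioc (1 / (2 * x)) (1 / x), G (1 / u) := by
      rw [← setIntegral_union (Set.Ioc_disjoint_Ioc_of_le le_rfl) measurableSet_Ioc
        (hint _ _) (hint _ _), Set.Ioc_union_Ioc_eq_Ioc hpos.le hle]
    have hJ : G x * (1 / (2 * x)) ≤ ∫ u in Set.Ioc (1 / (2 * x)) (1 / x), G (1 / u) := by
      have hc : ∫ u in Set.Ioc (1 / (2 * x)) (1 / x), G x = G x * (1 / (2 * x)) := by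
        rw [setIntegral_const, smul_eq_mul, Real.volume_real_Ioc_of_le hle]
        field_simp
        ring
      rw [← hc]
      refine setIntegral_mono_on (integrableOn_const (by simp)) (hint _ _) measurableSet_Ioc ?_
      intro u hu
      apply hm
      rw [le_one_div hx (hpos.trans hu.1)]
      exact hu.2
    have h2 := ih (2 * x) (by positivity)
    rw [Finset.sum_range_succ', hsplit, mul_add]
    have hJ2 := mul_le_mul_of_nonneg_left hJ hx.le
    have e1 : x * (G x * (1 / (2 * x))) = G x / 2 := by field_simp
    have e2 : ∑ k ∈ Finset.range n, (1 / 2 : ℝ) ^ (k + 1 + 1) * G (2 ^ (k + 1) * x) =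
        1 / 2 * ∑ k ∈ Finset.range n, (1 / 2 : ℝ) ^ (k + 1) * G (2 ^ k * (2 * x)) := by
      rw [Finset.mul_sum]
      refine Finset.sum_congr rfl fun k _ => ?_
      rw [show (2 : ℝ) ^ (k + 1) * x = 2 ^ k * (2 * x) by ring]
      ring
    rw [e2]
    simp only [zero_add, pow_one, pow_zero, one_mul]
    linarith

/-- Let `W` be a random variable with values in `(0,∞)` with continuous
positive Lebesgue density `gW` on `(0,∞)`, CDF `G` (strictly increasing on `[0,∞)` with range
`[0,1)`), inverse `H`, `B t = 1/H(1/t)` and `A t = t * ∫_0^{B t} G(1/u) du`.  Assume `G` is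
regularly varying at `0` with index `β = 1` and that `∫_0^∞ G(1/u) du = ∞`.  Then
`A t / B t → ∞` as `t → ∞`. -/
theorem stmt6
    {Ω : Type*} [MeasureSpace Ω] [IsProbabilityMeasure (ℙ : Measure Ω)]
    (W : Ω → ℝ) (hWmeas : Measurable W)
    (gW : ℝ → ℝ)
    (hgW_pos : ∀ w ∈ Set.Ioi (0 : ℝ), 0 < gW w)
    (hgW_cont : ContinuousOn gW (Set.Ioi 0))
    (hgW_supp : ∀ w ≤ (0 : ℝ), gW w = 0)
    (hdens : Measure.map W ℙ = volume.withDensity (fun w => ENNReal.ofReal (gW w)))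
    (G H B A : ℝ → ℝ)
    (hG : ∀ u, G u = (ℙ {ω | W ω ≤ u}).toReal)
    (hGmono : StrictMonoOn G (Set.Ici 0))
    (hGrange : G '' Set.Ici 0 = Set.Ico 0 1)
    (hH : ∀ u ≥ (0 : ℝ), H (G u) = u)
    (hGH : ∀ v ∈ Set.Ico (0 : ℝ) 1, G (H v) = v)
    (hB : ∀ t, B t = 1 / H (1 / t))
    (hA : ∀ t, A t = t * ∫ u in Set.Ioc (0 : ℝ) (B t), G (1 / u))
    (hreg : ∀ s > (0 : ℝ),
      Tendsto (fun t => G (s * t) / G t) (nhdsWithin 0 (Set.Ioi 0)) (nhds (s ^ (1 : ℝ))))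
    (hinf : ∫⁻ u in Set.Ioi (0 : ℝ), ENNReal.ofReal (G (1 / u)) = ⊤) :
    Tendsto (fun t => A t / B t) atTop atTop := by
  have hm : Monotone G := by
    intro a b hab
    rw [hG, hG]
    exact ENNReal.toReal_mono (measure_ne_top _ _) (measure_mono fun ω hω => le_trans hω hab)
  have h0 : ∀ u, 0 ≤ G u := fun u => by rw [hG]; exact ENNReal.toReal_nonneg
  have h1 : ∀ u, G u ≤ 1 := fun u => by
    rw [hG]; exact ENNReal.toReal_le_of_le_ofReal zero_le_one (by simpa using prob_le_one)
  have hG0 : G 0 = 0 := by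
    have : (0 : ℝ) ∈ G '' Set.Ici 0 := by rw [hGrange]; simp
    obtain ⟨y, hy, hy0⟩ := this
    exact le_antisymm ((hm (Set.mem_Ici.1 hy)).trans hy0.le) (h0 0)
  have hGpos : ∀ x > 0, 0 < G x := fun x hx => by
    have := hGmono (Set.mem_Ici.2 le_rfl) (Set.mem_Ici.2 hx.le) hx
    rwa [hG0] at this
  have hx : ∀ t > (1 : ℝ), 0 < H (1 / t) ∧ G (H (1 / t)) = 1 / t := by
    intro t ht
    have ht0 : 0 < 1 / t := by positivity
    have hmem : 1 / t ∈ Set.Ico (0 : ℝ) 1 :=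
      ⟨ht0.le, by rw [div_lt_one (by linarith)]; exact ht⟩
    refine ⟨?_, hGH _ hmem⟩
    by_contra hcon
    have := hm (not_lt.1 hcon)
    rw [hGH _ hmem, hG0] at this
    linarith
  have hlim : Tendsto (fun t => H (1 / t)) atTop (nhdsWithin 0 (Set.Ioi 0)) := by
    rw [tendsto_nhdsWithin_iff]
    refine ⟨?_, (eventually_gt_atTop 1).mono fun t ht => (hx t ht).1⟩
    rw [tendsto_order]
    refine ⟨fun a ha => (eventually_gt_atTop 1).mono fun t ht => ha.trans (hx t ht).1, ?_⟩
    intro a ha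
    filter_upwards [eventually_gt_atTop 1, eventually_gt_atTop (1 / G a)] with t ht ht2
    by_contra hcon
    have h3 := hm (not_lt.1 hcon)
    rw [(hx t ht).2] at h3
    have h4 := (one_div_lt (hGpos a ha) (by linarith)).1 ht2
    linarith
  rw [tendsto_atTop]
  intro C
  obtain ⟨n, hn⟩ := exists_nat_gt (2 * C)
  have hsum : Tendsto (fun x => ∑ k ∈ Finset.range n, (1 / 2 : ℝ) ^ (k + 1) *
      (G (2 ^ k * x) / G x)) (nhdsWithin 0 (Set.Ioi 0)) (nhds ((n : ℝ) / 2)) := by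
    have : (n : ℝ) / 2 =
        ∑ k ∈ Finset.range n, (1 / 2 : ℝ) ^ (k + 1) * ((2 : ℝ) ^ k) ^ (1 : ℝ) := by
      have : ∀ k ∈ Finset.range n, (1 / 2 : ℝ) ^ (k + 1) * ((2 : ℝ) ^ k) ^ (1 : ℝ) = 1 / 2 := by
        intro k _
        rw [Real.rpow_one, pow_succ, mul_right_comm, ← mul_pow]
        norm_num
      rw [Finset.sum_congr rfl this]
      simp [div_eq_mul_inv]
    rw [this]
    exact tendsto_finsetSum _ fun k _ => (hreg (2 ^ k) (by positivity)).const_mul _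
  have hev := (hsum.comp hlim).eventually (lt_mem_nhds (show C < (n : ℝ) / 2 by linarith))
  filter_upwards [hev, eventually_gt_atTop 1] with t ht ht1
  obtain ⟨hxp, hxe⟩ := hx t ht1
  have hlow := aux_lower_s6 G hm h0 h1 n _ hxp
  have ht0 : 0 < t := by linarith
  refine ht.le.trans ?_
  simp only [Function.comp_apply]
  rw [hA, hB]
  have e : ∑ k ∈ Finset.range n, (1 / 2 : ℝ) ^ (k + 1) *
      (G (2 ^ k * H (1 / t)) / G (H (1 / t))) =
      t * ∑ k ∈ Finset.range n, (1 / 2 : ℝ) ^ (k + 1) * G (2 ^ k * H (1 / t)) := by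
    rw [hxe, Finset.mul_sum]
    refine Finset.sum_congr rfl fun k _ => ?_
    rw [div_div_eq_mul_div, div_one]
    ring
  rw [e, div_div_eq_mul_div, div_one]
  calc _ ≤ t * (H (1 / t) * ∫ u in Set.Ioc (0 : ℝ) (1 / H (1 / t)), G (1 / u)) :=
        mul_le_mul_of_nonneg_left hlow ht0.le
    _ = _ := by ring
end

section
/- Let β ∈ (0, 1] and γ ∈ ℝ, and suppose the CDF G of W satisfies G(u) ~ c·u^β·|ln u|^γ as u → 0+ for some constant c > 0. Then there exists a constant c' > 0 such that B(t) ~ c'·t^{1/β}·(ln t)^{γ/β} as t → ∞, where B(t) = 1/H(1/t) and H is the inverse of G. -/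
open MeasureTheory ProbabilityTheory Filter Real

/-- Let `β ∈ (0,1]` and `γ ∈ ℝ`, and suppose the CDF `G` of `W` satisfies
`G(u) ~ c·u^β·|ln u|^γ` as `u → 0+` for some `c > 0`.  Then there is `c' > 0` such that
`B(t) ~ c'·t^{1/β}·(ln t)^{γ/β}` as `t → ∞`, where `B t = 1/H(1/t)` and `H` is the inverse
of `G`. -/
theorem stmt12
    {Ω : Type*} [MeasureSpace Ω] [IsProbabilityMeasure (ℙ : Measure Ω)]
    (W : Ω → ℝ) (hWmeas : Measurable W)
    (gW : ℝ → ℝ)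
    (hgW_pos : ∀ w ∈ Set.Ioi (0 : ℝ), 0 < gW w)
    (hgW_cont : ContinuousOn gW (Set.Ioi 0))
    (hgW_supp : ∀ w ≤ (0 : ℝ), gW w = 0)
    (hdens : Measure.map W ℙ = volume.withDensity (fun w => ENNReal.ofReal (gW w)))
    (G H B : ℝ → ℝ)
    (hG : ∀ u, G u = (ℙ {ω | W ω ≤ u}).toReal)
    (hGmono : StrictMonoOn G (Set.Ici 0))
    (hGrange : G '' Set.Ici 0 = Set.Ico 0 1)
    (hH : ∀ u ≥ (0 : ℝ), H (G u) = u)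
    (hGH : ∀ v ∈ Set.Ico (0 : ℝ) 1, G (H v) = v)
    (hB : ∀ t, B t = 1 / H (1 / t))
    (β γ : ℝ) (hβ : β ∈ Set.Ioc (0 : ℝ) 1)
    (c : ℝ) (hc : 0 < c)
    (hasymp : Tendsto (fun u => G u / (c * u ^ β * |Real.log u| ^ γ))
      (nhdsWithin 0 (Set.Ioi 0)) (nhds 1)) :
    ∃ c' > (0 : ℝ),
      Tendsto (fun t => B t / (c' * t ^ (1 / β) * (Real.log t) ^ (γ / β)))
        atTop (nhds 1) := by
  obtain ⟨hβ0, hβ1⟩ := hβ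
  have hG0 : G 0 = 0 := by
    have h0 : (0 : ℝ) ∈ G '' Set.Ici 0 := by rw [hGrange]; simp
    obtain ⟨x, hx, hx0⟩ := h0
    have h1 : G 0 ≤ G x := hGmono.monotoneOn (by simp) hx hx
    have h2 : G 0 ∈ Set.Ico (0 : ℝ) 1 := by rw [← hGrange]; exact ⟨0, by simp, rfl⟩
    linarith [h2.1]
  have hex : ∀ t : ℝ, 1 < t → 0 < H (1 / t) ∧ G (H (1 / t)) = 1 / t := by
    intro t ht
    have hv0 : 0 < 1 / t := by positivity
    have hv : 1 / t ∈ Set.Ico (0 : ℝ) 1 := ⟨hv0.le, by rw [div_lt_one (by linarith)]; exact ht⟩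
    refine ⟨?_, hGH _ hv⟩
    have hv' := hv
    rw [← hGrange] at hv'
    obtain ⟨x, hx, hxv⟩ := hv'
    rw [← hxv, hH x hx]
    rcases (show (0:ℝ) ≤ x from hx).eq_or_lt with h | h
    · rw [← h, hG0] at hxv; linarith
    · exact h
  set u : ℝ → ℝ := fun t => H (1 / t) with hu
  have hu0 : Tendsto u atTop (nhdsWithin 0 (Set.Ioi 0)) := by
    rw [tendsto_nhdsWithin_iff]
    constructor
    · rw [Metric.tendsto_atTop]
      intro ε hε
      have hGε : 0 < G ε := by
        have := hGmono (by simp) (show ε ∈ Set.Ici (0:ℝ) from hε.le) hε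
        rwa [hG0] at this
      refine ⟨max 2 (1 / G ε + 1), fun t ht => ?_⟩
      have ht2 : 2 ≤ t := le_trans (le_max_left _ _) ht
      have ht3 : 1 / G ε + 1 ≤ t := le_trans (le_max_right _ _) ht
      obtain ⟨hp, hq⟩ := hex t (by linarith)
      rw [Real.dist_eq, sub_zero, abs_of_pos hp]
      have h1 : 1 / t < G ε := by
        rw [one_div_lt (by linarith) hGε]; linarith
      by_contra hcon
      have h3 := hGmono.monotoneOn (show ε ∈ Set.Ici (0:ℝ) from hε.le)
        (show H (1 / t) ∈ Set.Ici (0:ℝ) from hp.le) (not_lt.mp hcon)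
      linarith
    · filter_upwards [eventually_gt_atTop 1] with t ht
      exact (hex t ht).1
  have hR := hasymp.comp hu0
  set R : ℝ → ℝ := (fun u => G u / (c * u ^ β * |Real.log u| ^ γ)) ∘ u with hRdef
  set L : ℝ → ℝ := fun t => - Real.log (u t) with hL
  have hLt : Tendsto L atTop atTop :=
    tendsto_neg_atBot_atTop.comp (Real.tendsto_log_nhdsGT_zero.comp hu0)
  have hRpos : ∀ᶠ t in atTop, 0 < R t := hR.eventually (lt_mem_nhds one_pos)
  -- the basic identity
  have hid : ∀ᶠ t in atTop, 1 / t = R t * c * (u t) ^ β * (L t) ^ γ := by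
    filter_upwards [hLt.eventually_gt_atTop 0, eventually_gt_atTop 1] with t hLp ht
    obtain ⟨hp, hq⟩ := hex t ht
    have hp' : 0 < u t := hp
    have habs : |Real.log (u t)| = L t := by
      rw [abs_of_neg]
      simp only [hL] at hLp; linarith
    have hRt : R t = (1 / t) / (c * (u t) ^ β * (L t) ^ γ) := by
      simp only [hRdef, Function.comp]
      rw [habs, show G (u t) = 1 / t from hq]
    have h1 : 0 < (u t) ^ β := Real.rpow_pos_of_pos hp' _
    have h2 : 0 < (L t) ^ γ := Real.rpow_pos_of_pos hLp _
    rw [hRt]; field_simp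
  have hlog : ∀ᶠ t in atTop, Real.log t / L t
      = β - (Real.log (R t) + Real.log c) * (L t)⁻¹ - γ * (Real.log (L t) / L t) := by
    filter_upwards [hLt.eventually_gt_atTop 0, eventually_gt_atTop 1, hid, hRpos]
      with t hLp ht hi hRp
    have hp' : 0 < u t := (hex t ht).1
    have h1 : 0 < (u t) ^ β := Real.rpow_pos_of_pos hp' _
    have h2 : 0 < (L t) ^ γ := Real.rpow_pos_of_pos hLp _
    have h3 := congrArg Real.log hi
    rw [Real.log_mul (by positivity) h2.ne', Real.log_mul (by positivity) h1.ne',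
      Real.log_mul hRp.ne' hc.ne', Real.log_rpow hp', Real.log_rpow hLp, one_div,
      Real.log_inv] at h3
    have h4 : Real.log (u t) = - L t := by simp [hL]
    rw [h4] at h3
    have h5 : Real.log t = β * L t - (Real.log (R t) + Real.log c) - γ * Real.log (L t) := by
      linarith
    rw [h5]; field_simp
  have hlim : Tendsto (fun t => Real.log t / L t) atTop (nhds β) := by
    rw [tendsto_congr' hlog]
    have hlR : Tendsto (fun t => Real.log (R t)) atTop (nhds (Real.log 1)) :=
      hR.log one_ne_zero
    have hll : Tendsto (fun t => Real.log (L t) / L t) atTop (nhds 0) :=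
      (Real.isLittleO_log_id_atTop.tendsto_div_nhds_zero).comp hLt
    have := ((tendsto_const_nhds (x := β)).sub
      ((hlR.add_const (Real.log c)).mul hLt.inv_tendsto_atTop)).sub (hll.const_mul γ)
    simpa using this
  refine ⟨c ^ (1 / β) * (β ^ (γ / β))⁻¹, by positivity, ?_⟩
  have hev : ∀ᶠ t in atTop,
      B t / (c ^ (1 / β) * (β ^ (γ / β))⁻¹ * t ^ (1 / β) * (Real.log t) ^ (γ / β))
      = (R t) ^ (1 / β) * β ^ (γ / β) * ((Real.log t / L t) ^ (γ / β))⁻¹ := by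
    filter_upwards [hLt.eventually_gt_atTop 0, eventually_gt_atTop 1, hid, hRpos]
      with t hLp ht hi hRp
    have hp' : 0 < u t := (hex t ht).1
    have hlt : 0 < Real.log t := Real.log_pos ht
    have ht0 : 0 < t := by linarith
    have h1 : 0 < (u t) ^ β := Real.rpow_pos_of_pos hp' _
    have h2 : 0 < (L t) ^ γ := Real.rpow_pos_of_pos hLp _
    have h3 := congrArg (fun x : ℝ => x ^ (1 / β)) hi
    rw [Real.mul_rpow (by positivity) h2.le, Real.mul_rpow (by positivity) h1.le,
      Real.mul_rpow hRp.le hc.le, ← Real.rpow_mul hp'.le, ← Real.rpow_mul hLp.le,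
      mul_one_div_cancel hβ0.ne', Real.rpow_one, Real.div_rpow zero_le_one ht0.le,
      Real.one_rpow, mul_one_div] at h3
    rw [hB t, show H (1 / t) = u t from rfl, Real.div_rpow hlt.le hLp.le]
    have p1 : 0 < t ^ (1 / β) := Real.rpow_pos_of_pos ht0 _
    have p2 : 0 < (Real.log t) ^ (γ / β) := Real.rpow_pos_of_pos hlt _
    have p3 : 0 < (L t) ^ (γ / β) := Real.rpow_pos_of_pos hLp _
    have p4 : 0 < c ^ (1 / β) := Real.rpow_pos_of_pos hc _
    have p5 : 0 < β ^ (γ / β) := Real.rpow_pos_of_pos hβ0 _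
    generalize t ^ (1 / β) = T at *
    generalize (Real.log t) ^ (γ / β) = A at *
    generalize (L t) ^ (γ / β) = D at *
    generalize c ^ (1 / β) = C at *
    generalize β ^ (γ / β) = E at *
    generalize (R t) ^ (1 / β) = Q at *
    rw [div_eq_iff p1.ne'] at h3
    field_simp
    linarith
  rw [tendsto_congr' hev]
  have l1 := hR.rpow_const (p := 1 / β) (Or.inl one_ne_zero)
  have l2 := hlim.rpow_const (p := γ / β) (Or.inl hβ0.ne')
  have p5 : 0 < β ^ (γ / β) := Real.rpow_pos_of_pos hβ0 _
  have l3 := (l1.mul_const (β ^ (γ / β))).mul (l2.inv₀ p5.ne')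
  rw [Real.one_rpow, one_mul, mul_inv_cancel₀ p5.ne'] at l3
  exact l3
end

section
/- Suppose the CDF G of W satisfies G(u) ~ c·u·|ln u|^{−1} as u → 0+ for some constant c > 0 (the case β = 1, γ = −1). Then there exists a constant c' > 0 such that A(t) ~ c'·t·ln ln t as t → ∞, so the convergence rate √(A(t)) ~ √(c')·√(t·ln ln t). -/
open MeasureTheory ProbabilityTheory Filter Real


/-- If `f` is interval integrable and `f u * (u * log u) → c`, its integral is `~ c log log x`. -/
lemma aux_integral (f : ℝ → ℝ) (hf : ∀ x, IntervalIntegrable f volume 0 x) (c : ℝ)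
    (h : Tendsto (fun u => f u * (u * Real.log u)) atTop (nhds c)) :
    Tendsto (fun x => (∫ u in (0 : ℝ)..x, f u) / Real.log (Real.log x)) atTop (nhds c) := by
  have hLL : Tendsto (fun x : ℝ => Real.log (Real.log x)) atTop atTop :=
    Real.tendsto_log_atTop.comp Real.tendsto_log_atTop
  rw [Metric.tendsto_atTop] at h
  rw [Metric.tendsto_nhds]
  intro ε hε
  obtain ⟨N, hN⟩ := h (ε / 2) (by positivity)
  set M : ℝ := max N 3 with hM
  have hM3 : (3 : ℝ) ≤ M := le_max_right _ _
  set K : ℝ := |(∫ u in (0 : ℝ)..M, f u)| + (|c| + ε / 2) * |Real.log (Real.log M)| with hK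
  have hb : ∀ᶠ x : ℝ in atTop, K / (ε / 2) < Real.log (Real.log x) := hLL.eventually_gt_atTop _
  filter_upwards [hb, eventually_ge_atTop M] with x hx hxM
  have hK0 : 0 ≤ K := by positivity
  have hlx : 0 < Real.log (Real.log x) := lt_of_le_of_lt (by positivity) hx
  have hpos : ∀ u ∈ Set.Icc M x, 0 < u * Real.log u := by
    intro u hu
    have : 1 < u := by linarith [hu.1]
    exact mul_pos (by linarith) (Real.log_pos this)
  have hcont : ContinuousOn (fun u : ℝ => (u * Real.log u)⁻¹) (Set.Icc M x) := by
    apply ContinuousOn.inv₀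
    · apply ContinuousOn.mul continuousOn_id
      apply Real.continuousOn_log.mono
      intro u hu
      have : 1 < u := by linarith [hu.1]
      simp; linarith
    · intro u hu; exact (hpos u hu).ne'
  have hii : IntervalIntegrable (fun u : ℝ => (u * Real.log u)⁻¹) volume M x := by
    apply ContinuousOn.intervalIntegrable
    rwa [Set.uIcc_of_le hxM]
  have hftc : ∫ u in M..x, (u * Real.log u)⁻¹ = Real.log (Real.log x) - Real.log (Real.log M) := by
    apply intervalIntegral.integral_eq_sub_of_hasDerivAt (f := fun u => Real.log (Real.log u))
    · intro u hu
      rw [Set.uIcc_of_le hxM] at hu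
      have h1 : 1 < u := by linarith [hu.1]
      have := (Real.hasDerivAt_log (by linarith : u ≠ 0)).log (Real.log_pos h1).ne'
      rwa [div_eq_mul_inv, ← mul_inv] at this
    · exact hii
  have hfi : IntervalIntegrable f volume M x := (hf M).symm.trans (hf x)
  have hkey : ‖∫ u in M..x, (f u - c * (u * Real.log u)⁻¹)‖
      ≤ ∫ u in M..x, (ε / 2) * (u * Real.log u)⁻¹ := by
    apply intervalIntegral.norm_integral_le_of_norm_le hxM
    · refine Filter.Eventually.of_forall fun u hu => ?_
      have hu' : u ∈ Set.Icc M x := ⟨hu.1.le, hu.2⟩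
      have hp := hpos u hu'
      have h1 := hN u (le_trans (le_max_left _ _) hu'.1)
      rw [Real.dist_eq] at h1
      have : f u - c * (u * Real.log u)⁻¹ = (f u * (u * Real.log u) - c) * (u * Real.log u)⁻¹ := by
        rw [sub_mul, mul_assoc, mul_inv_cancel₀ hp.ne', mul_one]
      rw [this, Real.norm_eq_abs, abs_mul, abs_of_pos (inv_pos.2 hp)]
      exact mul_le_mul_of_nonneg_right h1.le (inv_pos.2 hp).le
    · exact hii.const_mul _
  rw [intervalIntegral.integral_sub hfi (hii.const_mul _), intervalIntegral.integral_const_mul,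
    intervalIntegral.integral_const_mul, hftc, Real.norm_eq_abs] at hkey
  have hadd := intervalIntegral.integral_add_adjacent_intervals (hf M) hfi
  rw [Real.dist_eq, div_sub' hlx.ne', abs_div, abs_of_pos hlx, div_lt_iff₀ hlx, ← hadd]
  have hx2 : K < Real.log (Real.log x) * (ε / 2) := (div_lt_iff₀ (by positivity)).1 hx
  set I0 := ∫ u in (0 : ℝ)..M, f u
  set I1 := ∫ u in M..x, f u
  set m := Real.log (Real.log M)
  set l := Real.log (Real.log x)
  have e : I0 + I1 - l * c = I0 + (I1 - c * (l - m)) + (- (c * m)) := by ring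
  rw [e]
  have t1 := abs_add_three I0 (I1 - c * (l - m)) (-(c * m))
  rw [abs_neg, abs_mul] at t1
  have t2 : -m ≤ |m| := neg_le_abs m
  nlinarith

/-- Comparison of `log (-log G)` with `log (-log u)`. -/
lemma aux_log (G : ℝ → ℝ) (c : ℝ) (hc : 0 < c)
    (hasymp : Tendsto (fun u => G u / (c * u * |Real.log u|⁻¹))
      (nhdsWithin 0 (Set.Ioi 0)) (nhds 1)) (hGpos : ∀ u, 0 < u → 0 < G u) :
    Tendsto (fun u => Real.log (-Real.log (G u)) / Real.log (-Real.log u))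
      (nhdsWithin 0 (Set.Ioi 0)) (nhds 1) := by
  have hL : Tendsto (fun u : ℝ => -Real.log u) (nhdsWithin 0 (Set.Ioi 0)) atTop :=
    tendsto_neg_atBot_atTop.comp Real.tendsto_log_nhdsGT_zero
  have hLL : Tendsto (fun u : ℝ => Real.log (-Real.log u)) (nhdsWithin 0 (Set.Ioi 0)) atTop :=
    Real.tendsto_log_atTop.comp hL
  have h1 : Tendsto (fun u => Real.log (G u / (c * u * |Real.log u|⁻¹)))
      (nhdsWithin 0 (Set.Ioi 0)) (nhds 0) := by
    have := (Real.continuousAt_log one_ne_zero).tendsto.comp hasymp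
    rw [Real.log_one] at this
    exact this
  have h2 : Tendsto (fun u : ℝ => Real.log (-Real.log u) / (-Real.log u))
      (nhdsWithin 0 (Set.Ioi 0)) (nhds 0) :=
    (Real.isLittleO_log_id_atTop.tendsto_div_nhds_zero).comp hL
  have h3 : Tendsto (fun u : ℝ => (-Real.log u)⁻¹) (nhdsWithin 0 (Set.Ioi 0)) (nhds 0) :=
    tendsto_inv_atTop_zero.comp hL
  have hq : Tendsto (fun u => (-Real.log (G u)) / (-Real.log u))
      (nhdsWithin 0 (Set.Ioi 0)) (nhds 1) := by
    have h4 : Tendsto (fun u => 1 + Real.log (-Real.log u) / (-Real.log u)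
        - (Real.log c + Real.log (G u / (c * u * |Real.log u|⁻¹))) * (-Real.log u)⁻¹)
        (nhdsWithin 0 (Set.Ioi 0)) (nhds (1 + 0 - (Real.log c + 0) * 0)) :=
      (h2.const_add 1).sub ((h1.const_add _).mul h3)
    have h5 : (1 + 0 - (Real.log c + 0) * 0 : ℝ) = 1 := by ring
    rw [h5] at h4
    refine h4.congr' ?_
    filter_upwards [hL.eventually_gt_atTop 0, self_mem_nhdsWithin] with u hu hu0
    have hu0' : (0 : ℝ) < u := hu0
    have habs : |Real.log u| = -Real.log u := abs_of_neg (by linarith)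
    rw [habs, Real.log_div (hGpos u hu0').ne' (by positivity),
      Real.log_mul (by positivity) (by positivity), Real.log_mul hc.ne' hu0'.ne', Real.log_inv]
    have : Real.log u ≠ 0 := by intro h; simp [h] at hu
    field_simp
    ring
  have h6 : Tendsto (fun u => Real.log ((-Real.log (G u)) / (-Real.log u)))
      (nhdsWithin 0 (Set.Ioi 0)) (nhds 0) := by
    have := (Real.continuousAt_log one_ne_zero).tendsto.comp hq
    rw [Real.log_one] at this
    exact this
  have h7 : Tendsto (fun u => 1 + Real.log ((-Real.log (G u)) / (-Real.log u))
      / Real.log (-Real.log u)) (nhdsWithin 0 (Set.Ioi 0)) (nhds 1) := by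
    simpa using (h6.div_atTop hLL).const_add 1
  refine h7.congr' ?_
  filter_upwards [hL.eventually_gt_atTop 0, hLL.eventually_gt_atTop 0,
    hq.eventually (lt_mem_nhds one_pos)] with u hu hu2 hu3
  have hpos : 0 < -Real.log (G u) := by
    by_contra hcon
    exact absurd hu3 (not_lt.2 (div_nonpos_of_nonpos_of_nonneg (not_lt.1 hcon) hu.le))
  rw [Real.log_div hpos.ne' hu.ne', sub_div, div_self hu2.ne']
  ring

/-- Suppose the CDF `G` of `W` satisfies `G(u) ~ c·u·|ln u|⁻¹` as `u → 0+`
for some `c > 0` (the case `β = 1`, `γ = -1`).  Then there is `c' > 0` such that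
`A(t) ~ c'·t·ln ln t` as `t → ∞`, so the convergence rate
`√(A(t)) ~ √(c')·√(t·ln ln t)`. -/
theorem stmt13
    {Ω : Type*} [MeasureSpace Ω] [IsProbabilityMeasure (ℙ : Measure Ω)]
    (W : Ω → ℝ) (hWmeas : Measurable W)
    (gW : ℝ → ℝ)
    (hgW_pos : ∀ w ∈ Set.Ioi (0 : ℝ), 0 < gW w)
    (hgW_cont : ContinuousOn gW (Set.Ioi 0))
    (hgW_supp : ∀ w ≤ (0 : ℝ), gW w = 0)
    (hdens : Measure.map W ℙ = volume.withDensity (fun w => ENNReal.ofReal (gW w)))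
    (G H B A : ℝ → ℝ)
    (hG : ∀ u, G u = (ℙ {ω | W ω ≤ u}).toReal)
    (hGmono : StrictMonoOn G (Set.Ici 0))
    (hGrange : G '' Set.Ici 0 = Set.Ico 0 1)
    (hH : ∀ u ≥ (0 : ℝ), H (G u) = u)
    (hGH : ∀ v ∈ Set.Ico (0 : ℝ) 1, G (H v) = v)
    (hB : ∀ t, B t = 1 / H (1 / t))
    (hA : ∀ t, A t = t * ∫ u in Set.Ioc (0 : ℝ) (B t), G (1 / u))
    (c : ℝ) (hc : 0 < c)
    (hasymp : Tendsto (fun u => G u / (c * u * |Real.log u|⁻¹))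
      (nhdsWithin 0 (Set.Ioi 0)) (nhds 1)) :
    ∃ c' > (0 : ℝ),
      Tendsto (fun t => A t / (c' * t * Real.log (Real.log t))) atTop (nhds 1) ∧
      Tendsto (fun t => Real.sqrt (A t) /
        (Real.sqrt c' * Real.sqrt (t * Real.log (Real.log t)))) atTop (nhds 1) := by
  have hGm : Monotone G := by
    intro a b hab
    rw [hG, hG]
    exact ENNReal.toReal_mono (measure_ne_top _ _) (measure_mono fun ω hω => le_trans hω hab)
  have hGnn : ∀ u, 0 ≤ G u := fun u => by rw [hG]; exact ENNReal.toReal_nonneg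
  have hG1 : ∀ u, G u ≤ 1 := fun u => by
    rw [hG]; exact ENNReal.toReal_le_of_le_ofReal one_pos.le (by simpa using prob_le_one)
  have hGpos : ∀ u, 0 < u → 0 < G u := fun u hu =>
    (hGnn 0).trans_lt (hGmono (Set.mem_Ici.2 le_rfl) (Set.mem_Ici.2 hu.le) hu)
  have hG0 : G 0 = 0 := by
    have : (0 : ℝ) ∈ G '' Set.Ici 0 := by rw [hGrange]; simp
    obtain ⟨w, hw, hw0⟩ := this
    exact le_antisymm (le_of_le_of_eq (hGm (Set.mem_Ici.1 hw)) hw0) (hGnn 0)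
  have hw : ∀ t : ℝ, 1 < t → 0 < H (1 / t) ∧ G (H (1 / t)) = 1 / t := by
    intro t ht
    have h1 : (1 / t) ∈ Set.Ico (0 : ℝ) 1 := ⟨by positivity, by
      rw [div_lt_one (by linarith)]; exact ht⟩
    have h2 := h1
    rw [← hGrange] at h2
    obtain ⟨w, hw, hwt⟩ := h2
    refine ⟨?_, hGH _ h1⟩
    rw [← hwt, hH w hw]
    rcases (Set.mem_Ici.1 hw).eq_or_lt with h | h
    · rw [← h, hG0] at hwt
      have : 0 < 1 / t := by positivity
      linarith
    · exact h
  have hh : Tendsto (fun t => H (1 / t)) atTop (nhdsWithin 0 (Set.Ioi 0)) := by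
    rw [tendsto_nhdsWithin_iff]
    constructor
    · rw [Metric.tendsto_nhds]
      intro ε hε
      filter_upwards [eventually_gt_atTop 1, eventually_gt_atTop (1 / G ε)] with t ht ht2
      obtain ⟨h1, h2⟩ := hw t ht
      rw [Real.dist_eq, sub_zero, abs_of_pos h1]
      by_contra hcon
      have := hGm (not_lt.1 hcon)
      rw [h2] at this
      have h3 := (div_lt_iff₀ (hGpos ε hε)).1 ht2
      have h4 := (le_div_iff₀ (by linarith : (0 : ℝ) < t)).1 this
      linarith
    · filter_upwards [eventually_gt_atTop 1] with t ht using (hw t ht).1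
  have hBt : Tendsto B atTop atTop := by
    have : B = fun t => (H (1 / t))⁻¹ := by funext t; rw [hB, one_div]
    rw [this]
    exact tendsto_inv_nhdsGT_zero.comp hh
  have hfi : ∀ x, IntervalIntegrable (fun u => G (1 / u)) volume 0 x := by
    intro x
    have hmeas : Measurable (fun u : ℝ => G (1 / u)) :=
      hGm.measurable.comp (measurable_const.div measurable_id)
    refine (intervalIntegrable_const (c := (1 : ℝ))).mono_fun hmeas.aestronglyMeasurable ?_
    refine Filter.Eventually.of_forall fun u => ?_
    simp only [Real.norm_eq_abs, abs_one]
    rw [abs_of_nonneg (hGnn _)]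
    exact hG1 _
  have hlim : Tendsto (fun u => G (1 / u) * (u * Real.log u)) atTop (nhds c) := by
    have h1 := (hasymp.comp tendsto_inv_atTop_nhdsGT_zero).const_mul c
    rw [mul_one] at h1
    refine h1.congr' ?_
    filter_upwards [eventually_gt_atTop 1] with u hu
    have hl := Real.log_pos hu
    simp only [Function.comp, Real.log_inv, abs_neg, abs_of_pos hl, one_div]
    have : u ≠ 0 := by linarith
    field_simp
  have hF := (aux_integral _ hfi c hlim).comp hBt
  have hLo := (aux_log G c hc hasymp hGpos).comp hh
  have hLLB : Tendsto (fun t => Real.log (Real.log (B t))) atTop atTop :=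
    (Real.tendsto_log_atTop.comp Real.tendsto_log_atTop).comp hBt
  have hLL : Tendsto (fun x : ℝ => Real.log (Real.log x)) atTop atTop :=
    Real.tendsto_log_atTop.comp Real.tendsto_log_atTop
  have hmain : Tendsto (fun t => A t / (c * t * Real.log (Real.log t))) atTop (nhds 1) := by
    have h1 := (hF.div hLo one_ne_zero).div_const c
    rw [div_one, div_self hc.ne'] at h1
    refine h1.congr' ?_
    filter_upwards [eventually_gt_atTop 1, hLL.eventually_gt_atTop 0,
      hLLB.eventually_gt_atTop 0] with t ht hl hlB
    obtain ⟨h2, h3⟩ := hw t ht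
    have hBpos : 0 < B t := by rw [hB]; positivity
    have e1 : -Real.log (H (1 / t)) = Real.log (B t) := by
      rw [hB, one_div (H _), Real.log_inv]
    have e2 : -Real.log (G (H (1 / t))) = Real.log t := by
      rw [h3, one_div, Real.log_inv, neg_neg]
    simp only [Function.comp, Pi.div_apply]
    rw [e1, e2, hA, intervalIntegral.integral_of_le hBpos.le]
    have : t ≠ 0 := by linarith
    field_simp
  refine ⟨c, hc, hmain, ?_⟩
  have hs := hmain.sqrt
  rw [Real.sqrt_one] at hs
  refine hs.congr' ?_
  filter_upwards [eventually_gt_atTop 1, hLL.eventually_gt_atTop 0] with t ht hl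
  rw [Real.sqrt_div' _ (by positivity), mul_assoc, Real.sqrt_mul hc.le]
end
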